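/- Let G be a finite connected graph with n vertices, m edges, minimum degree δ ≥ 2 and maximum degree Δ, and let s be an integer with 1 ≤ s ≤ log n. Set t* = 14·(Δ+7)·m·log n/(δ·s·(1−λmax)). Then there is a constant c such that for every start vertex u, with probability at least 1 − c/n^3, the lazy simple random walk on G started at u visits, within t* steps, at least one vertex of every connected edge-induced subgraph of G having exactly s vertices. -/

import Mathlib

open scoped ENNReal Classical

-- `lambdaMax P` : the largest absolute value of an eigenvalue of `P` other than the
-- eigenvalue `1` (for an ergodic chain on a connected graph, `max(|λ₂|,…,|λₙ|)`).
noncomputable def lambdaMax {V : Type*} [Fintype V] [DecidableEq V] (P : Matrix V V ℝ) : ℝ :=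
  sSup {x : ℝ | ∃ μ ∈ spectrum ℝ P, μ ≠ 1 ∧ x = |μ|}

-- Transition matrix of the lazy simple random walk on `G`.
noncomputable def lazyMatrix {V : Type*} [Fintype V] [DecidableEq V] (G : SimpleGraph V) :
    Matrix V V ℝ :=
  Matrix.of fun u v =>
    (if u = v then (1 : ℝ) / 2 else 0) +
      (if G.Adj u v then 1 / (2 * ((G.neighborSet u).ncard : ℝ)) else 0)

-- Probability of the length-`t` trajectory `f 0, f 1, …, f t` for the Markov chain with
-- transition probabilities `P`, started at `u`.
noncomputable def chainTrajProb {V : Type*} [Fintype V] (P : V → V → ℝ) (u : V) {t : ℕ}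
    (f : Fin (t + 1) → V) : ℝ :=
  (if f 0 = u then (1 : ℝ) else 0) * ∏ i : Fin t, P (f i.castSucc) (f i.succ)

-- `missProb P u 𝒮 t` : the probability that during steps `0, 1, …, t` the chain started at
-- `u` completely avoids at least one of the vertex sets in the family `𝒮`.
noncomputable def missProb {V : Type*} [Fintype V] (P : V → V → ℝ) (u : V)
    (𝒮 : Set (Set V)) (t : ℕ) : ℝ :=
  ∑ f : Fin (t + 1) → V,
    if ∃ U ∈ 𝒮, ∀ i, f i ∉ U then chainTrajProb P u f else 0

-- The vertex set of the edge-induced subgraph determined by a set `E'` of edges.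
def edgeVerts {V : Type*} (E' : Finset (Sym2 V)) : Set V := {x : V | ∃ e ∈ E', x ∈ e}

-- The family of vertex sets of connected edge-induced subgraphs of `G` with exactly `s`
-- vertices.
def connEdgeSubgraphVerts {V : Type*} [Fintype V] (G : SimpleGraph V) (s : ℕ) :
    Set (Set V) :=
  {U : Set V | ∃ E' : Finset (Sym2 V), (E' : Set (Sym2 V)) ⊆ G.edgeSet ∧ E'.Nonempty ∧
    U = edgeVerts E' ∧ U.ncard = s ∧
    ((SimpleGraph.fromEdgeSet (E' : Set (Sym2 V))).induce (edgeVerts E')).Connected}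

/-!
Let `λ = lambdaMax P` for the lazy walk `P`, which is reversible with respect to the degrees `π`
and has nonnegative spectrum. Functions vanishing on a vertex set `T` have small mean by
Cauchy–Schwarz, so on them the Poincaré inequality bounds the quadratic form of `P` by
`ρ = 1 - (1 - λ) π(T) / π(V)` times the squared `ℓ²(π)` norm. As `P` is positive semidefinite,
the walk killed on `T` therefore contracts `ℓ²(π)` by `ρ` in every step. If `T` has `s` vertices,
it is avoided for `t` steps with probability at most
`n ρ ^ t ≤ n exp (-(1 - λ) δ s t / (2 m))`.

A connected graph on `s` vertices is exhausted by a walk of length `2 (s - 1)`, so there are at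
most `n Δ ^ (2 (s - 1))` connected vertex sets of size `s`, and a union bound concludes.
-/

open Matrix Finset

section Reversible

variable {V : Type*} [Fintype V] [DecidableEq V] {π : V → ℝ} {P : Matrix V V ℝ}

theorem mem_spectrum_iff_exists_mulVec_eq_smul {μ : ℝ} :
    μ ∈ spectrum ℝ P ↔ ∃ f ≠ 0, P *ᵥ f = μ • f := by
  rw [← Matrix.spectrum_toLin', ← Module.End.hasEigenvalue_iff_mem_spectrum]
  refine ⟨fun h ↦ ?_, fun ⟨f, hf, hfμ⟩ ↦ ?_⟩
  · obtain ⟨f, hf⟩ := h.exists_hasEigenvector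
    exact ⟨f, hf.2, hf.apply_eq_smul⟩
  · exact Module.End.hasEigenvalue_of_hasEigenvector
      ⟨Module.End.mem_eigenspace_iff.2 hfμ, hf⟩

theorem posSemidef_diagonal_mul_of_spectrum_nonneg (hπ : ∀ v, 0 < π v)
    (hrev : (diagonal π * P).IsHermitian) (hP : ∀ μ ∈ spectrum ℝ P, 0 ≤ μ) :
    (diagonal π * P).PosSemidef := by
  -- Conjugation by `√π` turns `P` into a symmetric matrix with the same spectrum.
  have hsqrt_ne : ∀ v, √(π v) ≠ 0 := fun v ↦ (Real.sqrt_pos.2 (hπ v)).ne'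
  let W : (Matrix V V ℝ)ˣ :=
    { val := diagonal fun v ↦ √(π v)
      inv := diagonal fun v ↦ (√(π v))⁻¹
      val_inv := by simp [diagonal_mul_diagonal, hsqrt_ne]
      inv_val := by simp [diagonal_mul_diagonal, hsqrt_ne] }
  have hW : W.valᴴ = W.val := by simp [W]
  have hWinv : W⁻¹.valᴴ = W⁻¹.val := by simp [W]
  have hWW : W.val * W.val = diagonal π := by
    simp [W, diagonal_mul_diagonal, Real.mul_self_sqrt (hπ _).le]
  have hpsd : (W.val * P * W⁻¹.val).PosSemidef := by
    refine posSemidef_iff_isHermitian_and_spectrum_nonneg.2 ⟨?_, fun μ hμ ↦ ?_⟩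
    · have hconj : W.val * P * W⁻¹.val = W⁻¹.valᴴ * (diagonal π * P) * W⁻¹.val := by
        rw [hWinv, ← hWW, mul_assoc W.val _ P, Units.inv_mul_cancel_left]
      exact hconj ▸ isHermitian_conjTranspose_mul_mul _ hrev
    · rw [spectrum.units_conjugate] at hμ
      exact hP μ hμ
  have hunconj : diagonal π * P = W.valᴴ * (W.val * P * W⁻¹.val) * W.val := by
    rw [hW, ← hWW, mul_assoc W.val (W.val * P * _), Units.inv_mul_cancel_right]
    simp only [mul_assoc]
  exact hunconj ▸ hpsd.conjTranspose_mul_mul_same _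

theorem abs_le_one_of_mem_spectrum_of_mem_rowStochastic (hP : P ∈ rowStochastic ℝ V) {μ : ℝ}
    (hμ : μ ∈ spectrum ℝ P) : |μ| ≤ 1 := by
  obtain ⟨f, hf, hfμ⟩ := mem_spectrum_iff_exists_mulVec_eq_smul.1 hμ
  obtain ⟨v, hv⟩ := Function.ne_iff.1 hf
  have : Nonempty V := ⟨v⟩
  obtain ⟨u, hu⟩ := Finite.exists_max fun v ↦ |f v|
  have hfu : 0 < |f u| := (abs_pos.2 hv).trans_le (hu v)
  refine le_of_mul_le_mul_right ?_ hfu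
  calc |μ| * |f u| = |∑ v, P u v * f v| := by
        rw [← abs_mul]
        exact congrArg abs (congrFun hfμ u).symm
    _ ≤ ∑ v, |P u v * f v| := abs_sum_le_sum_abs _ _
    _ ≤ ∑ v, P u v * |f u| := by
        refine sum_le_sum fun v _ ↦ ?_
        rw [abs_mul, abs_of_nonneg (hP.1 u v)]
        exact mul_le_mul_of_nonneg_left (hu v) (hP.1 u v)
    _ = 1 * |f u| := by rw [← sum_mul, sum_row_of_mem_rowStochastic hP]

theorem nonneg_of_mem_spectrum_of_posSemidef_diagonal_mul (hπ : ∀ v, 0 < π v)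
    (hP : (diagonal π * P).PosSemidef) {μ : ℝ} (hμ : μ ∈ spectrum ℝ P) : 0 ≤ μ := by
  obtain ⟨f, hf, hfμ⟩ := mem_spectrum_iff_exists_mulVec_eq_smul.1 hμ
  have hnorm : 0 < f ⬝ᵥ diagonal π *ᵥ f :=
    (PosDef.diagonal hπ).dotProduct_mulVec_pos hf
  have hform : 0 ≤ μ * (f ⬝ᵥ diagonal π *ᵥ f) := by
    simpa [← mulVec_mulVec, hfμ, mulVec_smul] using hP.dotProduct_mulVec_nonneg f
  exact nonneg_of_mul_nonneg_left hform hnorm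

theorem dotProduct_mulVec_eq_of_reversible (hrev : (diagonal π * P).IsHermitian)
    (hone : P *ᵥ 1 = 1) (f : V → ℝ) : π ⬝ᵥ P *ᵥ f = π ⬝ᵥ f := by
  have hstat : π ᵥ* P = π := by
    calc π ᵥ* P = 1 ᵥ* (diagonal π * P) := by
          rw [← vecMul_vecMul]
          congr
          ext v
          simp [vecMul_diagonal]
      _ = (diagonal π * P) *ᵥ 1 := by
          rw [← mulVec_transpose, ← conjTranspose_eq_transpose_of_trivial, hrev.eq]
      _ = π := by
          rw [← mulVec_mulVec, hone]
          ext v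
          simp [mulVec_diagonal]
  rw [dotProduct_mulVec, hstat]

-- The rank-one term changes the eigenvalue of the constant functions from `l - 1` to `0`.
theorem posSemidef_diagonal_mul_of_forall_eigenvalue_le [Nonempty V] (hπ : ∀ v, 0 < π v)
    (hrev : (diagonal π * P).IsHermitian) (hone : P *ᵥ 1 = 1) {l : ℝ}
    (hl : ∀ f μ, f ≠ 0 → π ⬝ᵥ f = 0 → P *ᵥ f = μ • f → μ ≤ l) :
    (diagonal π * (l • 1 - P + ((1 - l) / ∑ v, π v) • vecMulVec 1 π)).PosSemidef := by
  have hmass : 0 < ∑ v, π v := sum_pos (fun v _ ↦ hπ v) univ_nonempty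
  have hmulVec_one : diagonal π *ᵥ 1 = π := by
    ext v
    simp [mulVec_diagonal]
  refine posSemidef_diagonal_mul_of_spectrum_nonneg hπ ?_ fun ν hν ↦ ?_
  · rw [mul_add, mul_sub, Matrix.mul_smul, Matrix.mul_smul, mul_one, mul_vecMulVec, hmulVec_one]
    exact (((isHermitian_diagonal _).smul (.all _)).sub hrev).add
      ((posSemidef_vecMulVec_self_star π).isHermitian.smul (.all _))
  · obtain ⟨f, hf, hfν⟩ := mem_spectrum_iff_exists_mulVec_eq_smul.1 hν
    have heig : l • f - P *ᵥ f + ((1 - l) / (∑ v, π v) * (π ⬝ᵥ f)) • 1 = ν • f := by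
      rw [← hfν, add_mulVec, sub_mulVec, smul_mulVec, smul_mulVec, one_mulVec, vecMulVec_mulVec]
      ext v
      simp
    have hν_mean : ν * (π ⬝ᵥ f) = 0 := by
      have hmean := congrArg (π ⬝ᵥ ·) heig
      simp only [dotProduct_add, dotProduct_sub, dotProduct_smul, smul_eq_mul, dotProduct_one,
        dotProduct_mulVec_eq_of_reversible hrev hone] at hmean
      rw [← hmean]
      field_simp
      ring
    rcases mul_eq_zero.1 hν_mean with hν0 | hmean0
    · exact hν0.ge
    · have hfν' : P *ᵥ f = (l - ν) • f := by
        rw [sub_smul, ← heig, hmean0]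
        simp
      linarith [hl f _ hf hmean0 hfν']

theorem sq_dotProduct_mulVec_le_of_posSemidef {n : Type*} [Fintype n] {A : Matrix n n ℝ}
    (hA : A.PosSemidef) (f g : n → ℝ) :
    (f ⬝ᵥ A *ᵥ g) ^ 2 ≤ (f ⬝ᵥ A *ᵥ f) * (g ⬝ᵥ A *ᵥ g) := by
  have hsymm : ∀ f g : n → ℝ, f ⬝ᵥ A *ᵥ g = g ⬝ᵥ A *ᵥ f := fun f g ↦ by
    rw [dotProduct_mulVec, ← mulVec_transpose, dotProduct_comm,
      ← conjTranspose_eq_transpose_of_trivial, hA.isHermitian.eq]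
  classical
  simpa only [toLinearMap₂'_apply'] using
    LinearMap.BilinForm.apply_sq_le_of_symm (toLinearMap₂' ℝ A)
      (fun f ↦ by simpa [toLinearMap₂'_apply'] using hA.dotProduct_mulVec_nonneg f)
      ⟨fun f g ↦ by simpa only [toLinearMap₂'_apply', RingHom.id_apply] using hsymm f g⟩ f g

theorem finite_setOf_abs_eigenvalue_ne_one (P : Matrix V V ℝ) :
    {x : ℝ | ∃ μ ∈ spectrum ℝ P, μ ≠ 1 ∧ x = |μ|}.Finite :=
  (finite_real_spectrum.image abs).subset fun _ ⟨μ, hμ, _, hx⟩ ↦ ⟨μ, hμ, hx.symm⟩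

theorem abs_le_lambdaMax {μ : ℝ} (hμ : μ ∈ spectrum ℝ P) (hμ1 : μ ≠ 1) : |μ| ≤ lambdaMax P :=
  le_csSup (finite_setOf_abs_eigenvalue_ne_one P).bddAbove ⟨μ, hμ, hμ1, rfl⟩

theorem lambdaMax_nonneg (P : Matrix V V ℝ) : 0 ≤ lambdaMax P :=
  Real.sSup_nonneg fun _ ⟨μ, _, _, hx⟩ ↦ hx ▸ abs_nonneg μ

theorem lambdaMax_lt_one (hP : ∀ μ ∈ spectrum ℝ P, μ ≠ 1 → |μ| < 1) : lambdaMax P < 1 := by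
  rcases Set.eq_empty_or_nonempty {x : ℝ | ∃ μ ∈ spectrum ℝ P, μ ≠ 1 ∧ x = |μ|} with h | h
  · rw [lambdaMax, h, Real.sSup_empty]
    exact one_pos
  · obtain ⟨μ, hμ, hμ1, hmax⟩ := h.csSup_mem (finite_setOf_abs_eigenvalue_ne_one P)
    exact hmax.trans_lt (hP μ hμ hμ1)

theorem dotProduct_mulVec_le_lambdaMax [Nonempty V] (hπ : ∀ v, 0 < π v)
    (hrev : (diagonal π * P).IsHermitian) (hone : P *ᵥ 1 = 1)
    (hharm : ∀ f, P *ᵥ f = f → ∀ u v, f u = f v) (f : V → ℝ) :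
    f ⬝ᵥ (diagonal π * P) *ᵥ f ≤ lambdaMax P * (f ⬝ᵥ diagonal π *ᵥ f) +
      (1 - lambdaMax P) / (∑ v, π v) * (π ⬝ᵥ f) ^ 2 := by
  have hgap : ∀ f μ, f ≠ 0 → π ⬝ᵥ f = 0 → P *ᵥ f = μ • f → μ ≤ lambdaMax P := by
    intro f μ hf hmean hfμ
    have hμ1 : μ ≠ 1 := by
      rintro rfl
      obtain ⟨v, hv⟩ := Function.ne_iff.1 hf
      have hconst : π ⬝ᵥ f = (∑ u, π u) * f v := by
        rw [sum_mul]
        exact sum_congr rfl fun u _ ↦ by rw [hharm f (by simpa using hfμ) u v]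
      have hmass : 0 < ∑ v, π v := sum_pos (fun v _ ↦ hπ v) univ_nonempty
      exact mul_ne_zero hmass.ne' hv (hconst ▸ hmean)
    exact (le_abs_self μ).trans
      (abs_le_lambdaMax (mem_spectrum_iff_exists_mulVec_eq_smul.2 ⟨f, hf, hfμ⟩) hμ1)
  have hform :=
    (posSemidef_diagonal_mul_of_forall_eigenvalue_le hπ hrev hone hgap).dotProduct_mulVec_nonneg f
  have hπf : f ⬝ᵥ diagonal π *ᵥ 1 = π ⬝ᵥ f := by
    simp [dotProduct, mulVec_diagonal, mul_comm]
  rw [star_trivial, ← mulVec_mulVec, add_mulVec, sub_mulVec, smul_mulVec, smul_mulVec,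
    one_mulVec, vecMulVec_mulVec] at hform
  simp only [mulVec_add, mulVec_sub, mulVec_smul, dotProduct_add, dotProduct_sub, dotProduct_smul,
    smul_eq_mul, op_smul_eq_smul, hπf] at hform
  rw [← mulVec_mulVec]
  linarith

/-- An irreducible Markov chain with transition matrix `P`, reversible with respect to the positive
weights `π` and with nonnegative spectrum, as laziness guarantees. Reversibility and
nonnegativity together say that the matrix of flows `π u * P u v` is positive semidefinite;
irreducibility is encoded as the absence of nonconstant harmonic functions. -/
structure IsPositiveReversible (π : V → ℝ) (P : Matrix V V ℝ) : Prop where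
  weight_pos (v : V) : 0 < π v
  rowStochastic : P ∈ rowStochastic ℝ V
  posSemidef : (diagonal π * P).PosSemidef
  eq_of_mulVec_eq_self (f : V → ℝ) (hf : P *ᵥ f = f) (u v : V) : f u = f v

/-- The factor `1 - (1 - λ) π(T) / π(V)` by which each step of the chain killed on `T` contracts
`ℓ²(π)`. -/
noncomputable def avoidFactor (π : V → ℝ) (P : Matrix V V ℝ) (T : Finset V) : ℝ :=
  1 - (1 - lambdaMax P) * ((∑ v ∈ T, π v) / ∑ v, π v)

theorem sq_dotProduct_le_of_eqOn_zero (hπ : ∀ v, 0 ≤ π v) {T : Finset V} {f : V → ℝ}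
    (hf : ∀ v ∈ T, f v = 0) :
    (π ⬝ᵥ f) ^ 2 ≤ (∑ v, π v - ∑ v ∈ T, π v) * (f ⬝ᵥ diagonal π *ᵥ f) := by
  have hsupp : ∀ v ∉ Tᶜ, f v = 0 := fun v hv ↦ hf v (by simpa using hv)
  have hmean : π ⬝ᵥ f = ∑ v ∈ Tᶜ, π v * f v :=
    (sum_subset (subset_univ _) fun v _ hv ↦ by rw [hsupp v hv, mul_zero]).symm
  have hnorm : f ⬝ᵥ diagonal π *ᵥ f = ∑ v ∈ Tᶜ, π v * f v ^ 2 := by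
    rw [sum_subset (subset_univ _) fun v _ hv ↦ by rw [hsupp v hv]; simp]
    exact sum_congr rfl fun v _ ↦ by rw [mulVec_diagonal]; ring
  rw [hmean, hnorm, ← sum_add_sum_compl T, add_sub_cancel_left]
  exact sum_sq_le_sum_mul_sum_of_sq_le_mul _ (fun v _ ↦ hπ v)
    (fun v _ ↦ mul_nonneg (hπ v) (sq_nonneg _)) fun v _ ↦ (by ring : _ = _).le

namespace IsPositiveReversible

theorem lambdaMax_lt_one (h : IsPositiveReversible π P) : lambdaMax P < 1 :=
  _root_.lambdaMax_lt_one fun μ hμ hμ1 ↦ by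
    have hμ0 := nonneg_of_mem_spectrum_of_posSemidef_diagonal_mul h.weight_pos h.posSemidef hμ
    rw [abs_of_nonneg hμ0]
    exact lt_of_le_of_ne
      ((le_abs_self μ).trans (abs_le_one_of_mem_spectrum_of_mem_rowStochastic h.rowStochastic hμ))
      hμ1

theorem avoidFactor_nonneg (h : IsPositiveReversible π P) (T : Finset V) :
    0 ≤ avoidFactor π P T := by
  have hle : (∑ v ∈ T, π v) / ∑ v, π v ≤ 1 := div_le_one_of_le₀
    (sum_le_sum_of_subset_of_nonneg (subset_univ T) fun v _ _ ↦ (h.weight_pos v).le)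
    (sum_nonneg fun v _ ↦ (h.weight_pos v).le)
  have hnonneg : 0 ≤ (∑ v ∈ T, π v) / ∑ v, π v := div_nonneg
    (sum_nonneg fun v _ ↦ (h.weight_pos v).le) (sum_nonneg fun v _ ↦ (h.weight_pos v).le)
  exact sub_nonneg.2 (mul_le_one₀ (by linarith [lambdaMax_nonneg P]) hnonneg hle)

theorem dotProduct_mulVec_le_avoidFactor_mul [Nonempty V] (h : IsPositiveReversible π P)
    {T : Finset V} {f : V → ℝ} (hf : ∀ v ∈ T, f v = 0) :
    f ⬝ᵥ (diagonal π * P) *ᵥ f ≤ avoidFactor π P T * (f ⬝ᵥ diagonal π *ᵥ f) := by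
  have hmass : 0 < ∑ v, π v := sum_pos (fun v _ ↦ h.weight_pos v) univ_nonempty
  have hgap : 0 ≤ 1 - lambdaMax P := by linarith [h.lambdaMax_lt_one]
  calc f ⬝ᵥ (diagonal π * P) *ᵥ f
      ≤ lambdaMax P * (f ⬝ᵥ diagonal π *ᵥ f) +
          (1 - lambdaMax P) / (∑ v, π v) * (π ⬝ᵥ f) ^ 2 :=
        dotProduct_mulVec_le_lambdaMax h.weight_pos h.posSemidef.isHermitian h.rowStochastic.2
          h.eq_of_mulVec_eq_self f
    _ ≤ lambdaMax P * (f ⬝ᵥ diagonal π *ᵥ f) + (1 - lambdaMax P) / (∑ v, π v) *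
          ((∑ v, π v - ∑ v ∈ T, π v) * (f ⬝ᵥ diagonal π *ᵥ f)) := by
        gcongr
        exact sq_dotProduct_le_of_eqOn_zero (fun v ↦ (h.weight_pos v).le) hf
    _ = avoidFactor π P T * (f ⬝ᵥ diagonal π *ᵥ f) := by
        rw [avoidFactor]
        field_simp
        ring

theorem indicator_mulVec_dotProduct_le [Nonempty V] (h : IsPositiveReversible π P)
    {T : Finset V} {f : V → ℝ} (hf : ∀ v ∈ T, f v = 0) :
    (T : Set V)ᶜ.indicator (P *ᵥ f) ⬝ᵥ diagonal π *ᵥ (T : Set V)ᶜ.indicator (P *ᵥ f) ≤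
      avoidFactor π P T ^ 2 * (f ⬝ᵥ diagonal π *ᵥ f) := by
  have hρ := h.avoidFactor_nonneg T
  have hnorm_nonneg : ∀ g : V → ℝ, 0 ≤ g ⬝ᵥ diagonal π *ᵥ g := fun g ↦ by
    simpa using (PosDef.diagonal h.weight_pos).posSemidef.dotProduct_mulVec_nonneg g
  have hform_nonneg : 0 ≤ f ⬝ᵥ (diagonal π * P) *ᵥ f := by
    simpa using h.posSemidef.dotProduct_mulVec_nonneg f
  set g := (T : Set V)ᶜ.indicator (P *ᵥ f) with hg
  have hgT : ∀ v ∈ T, g v = 0 := fun v hv ↦ Set.indicator_of_notMem (by simpa using hv) _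
  have hproj : g ⬝ᵥ (diagonal π * P) *ᵥ f = g ⬝ᵥ diagonal π *ᵥ g := by
    rw [← mulVec_mulVec]
    refine sum_congr rfl fun v _ ↦ ?_
    by_cases hv : v ∈ T
    · rw [hgT v hv, zero_mul, zero_mul]
    · rw [mulVec_diagonal, mulVec_diagonal, hg, Set.indicator_of_mem (by simpa using hv)]
  have hsq : (g ⬝ᵥ diagonal π *ᵥ g) ^ 2 ≤
      (avoidFactor π P T ^ 2 * (f ⬝ᵥ diagonal π *ᵥ f)) * (g ⬝ᵥ diagonal π *ᵥ g) := by
    calc (g ⬝ᵥ diagonal π *ᵥ g) ^ 2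
        ≤ (g ⬝ᵥ (diagonal π * P) *ᵥ g) * (f ⬝ᵥ (diagonal π * P) *ᵥ f) :=
          hproj ▸ sq_dotProduct_mulVec_le_of_posSemidef h.posSemidef g f
      _ ≤ (avoidFactor π P T * (g ⬝ᵥ diagonal π *ᵥ g)) *
            (avoidFactor π P T * (f ⬝ᵥ diagonal π *ᵥ f)) :=
          mul_le_mul (h.dotProduct_mulVec_le_avoidFactor_mul hgT)
            (h.dotProduct_mulVec_le_avoidFactor_mul hf) hform_nonneg
            (mul_nonneg hρ (hnorm_nonneg g))
      _ = _ := by ring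
  rcases (hnorm_nonneg g).eq_or_lt with hzero | hpos
  · rw [← hzero]
    exact mul_nonneg (sq_nonneg _) (hnorm_nonneg f)
  · exact le_of_mul_le_mul_right (sq (g ⬝ᵥ diagonal π *ᵥ g) ▸ hsq) hpos

end IsPositiveReversible

end Reversible

section MissProb

variable {V : Type*} [Fintype V] {P : V → V → ℝ}

theorem chainTrajProb_nonneg (hP : ∀ a b, 0 ≤ P a b) (u : V) {t : ℕ} (f : Fin (t + 1) → V) :
    0 ≤ chainTrajProb P u f :=
  mul_nonneg (by split_ifs <;> norm_num) (prod_nonneg fun _ _ ↦ hP _ _)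

theorem chainTrajProb_cons (u a : V) {t : ℕ} (g : Fin (t + 1) → V) :
    chainTrajProb P u (Fin.cons a g : Fin (t + 2) → V) =
      if a = u then ∑ b, P u b * chainTrajProb P b g else 0 := by
  have hnext : ∑ b, P u b * chainTrajProb P b g = P u (g 0) * chainTrajProb P (g 0) g :=
    Fintype.sum_eq_single (g 0) fun b hb ↦ by simp [chainTrajProb, hb.symm]
  split_ifs with ha
  · subst ha
    rw [hnext]
    simp [chainTrajProb, Fin.prod_univ_succ]
  · simp [chainTrajProb, ha]

theorem missProb_singleton_zero (u : V) (U : Set V) :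
    missProb P u {U} 0 = Uᶜ.indicator 1 u := by
  rw [missProb, ← (Equiv.funUnique (Fin 1) V).symm.sum_comp,
    Fintype.sum_eq_single u fun b hb ↦ by simp [chainTrajProb, hb]]
  simp [chainTrajProb, Set.indicator_apply]

theorem missProb_singleton_succ (u : V) (U : Set V) (t : ℕ) :
    missProb P u {U} (t + 1) =
      Uᶜ.indicator (fun a ↦ ∑ b, P a b * missProb P b {U} t) u := by
  have hsplit : ∀ a (g : Fin (t + 1) → V),
      (∀ i, (Fin.cons a g : Fin (t + 2) → V) i ∉ U) ↔ a ∉ U ∧ ∀ i, g i ∉ U :=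
    fun a g ↦ by simp [Fin.forall_fin_succ]
  rw [missProb, ← (Fin.consEquiv fun _ : Fin (t + 2) ↦ V).sum_comp, Fintype.sum_prod_type,
    Fintype.sum_eq_single u fun a ha ↦ by simp [Fin.consEquiv, chainTrajProb_cons, ha]]
  by_cases hu : u ∈ U
  · simp [Fin.consEquiv, hsplit, hu]
  · rw [Set.indicator_of_mem (by exact hu)]
    simp only [missProb, mul_sum, Fin.consEquiv, Equiv.coe_fn_mk, Set.mem_singleton_iff,
      exists_eq_left, hsplit, hu, not_false_eq_true, true_and, chainTrajProb_cons, if_true]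
    rw [sum_comm]
    refine sum_congr rfl fun g _ ↦ ?_
    split_ifs <;> simp

theorem missProb_singleton_of_mem {u : V} {U : Set V} (hu : u ∈ U) (t : ℕ) :
    missProb P u {U} t = 0 := by
  cases t with
  | zero => rw [missProb_singleton_zero, Set.indicator_of_notMem (by simpa using hu)]
  | succ t => rw [missProb_singleton_succ, Set.indicator_of_notMem (by simpa using hu)]

theorem missProb_le_sum (hP : ∀ a b, 0 ≤ P a b) (u : V) {𝒮 : Set (Set V)}
    {F : Finset (Finset V)} (hF : ∀ U ∈ 𝒮, ∃ T ∈ F, (T : Set V) = U) (t : ℕ) :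
    missProb P u 𝒮 t ≤ ∑ T ∈ F, missProb P u {(T : Set V)} t := by
  simp only [missProb]
  rw [sum_comm]
  refine sum_le_sum fun f _ ↦ ?_
  have hterm : ∀ T ∈ F, 0 ≤
      if ∃ U ∈ ({(T : Set V)} : Set (Set V)), ∀ i, f i ∉ U then chainTrajProb P u f else 0 :=
    fun T _ ↦ by split_ifs <;> simp [chainTrajProb_nonneg hP u f]
  split_ifs with h
  · obtain ⟨U, hU, hfU⟩ := h
    obtain ⟨T, hT, rfl⟩ := hF U hU
    exact (if_pos ⟨_, rfl, hfU⟩).ge.trans (single_le_sum hterm hT)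
  · exact sum_nonneg hterm

end MissProb

namespace IsPositiveReversible

variable {V : Type*} [Fintype V] [DecidableEq V] {π : V → ℝ} {P : Matrix V V ℝ}

theorem missProb_dotProduct_le [Nonempty V] (h : IsPositiveReversible π P) (T : Finset V) (t : ℕ) :
    (fun u ↦ missProb P u {(T : Set V)} t) ⬝ᵥ diagonal π *ᵥ
        (fun u ↦ missProb P u {(T : Set V)} t) ≤
      (avoidFactor π P T ^ t) ^ 2 * ∑ v, π v := by
  induction t with
  | zero =>
    have hstart : (fun u ↦ missProb P u {(T : Set V)} 0) = (T : Set V)ᶜ.indicator 1 :=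
      funext fun u ↦ missProb_singleton_zero u _
    rw [hstart, pow_zero, one_pow, one_mul]
    refine sum_le_sum fun v _ ↦ ?_
    rw [mulVec_diagonal]
    by_cases hv : v ∈ T <;> simp [hv, (h.weight_pos v).le]
  | succ t ih =>
    have hstep : (fun u ↦ missProb P u {(T : Set V)} (t + 1)) =
        (T : Set V)ᶜ.indicator (P *ᵥ fun u ↦ missProb P u {(T : Set V)} t) :=
      funext fun u ↦ missProb_singleton_succ u _ t
    rw [hstep]
    calc _ ≤ avoidFactor π P T ^ 2 * _ :=
          h.indicator_mulVec_dotProduct_le fun v hv ↦ missProb_singleton_of_mem hv t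
      _ ≤ avoidFactor π P T ^ 2 * ((avoidFactor π P T ^ t) ^ 2 * ∑ v, π v) := by gcongr
      _ = (avoidFactor π P T ^ (t + 1)) ^ 2 * ∑ v, π v := by ring

theorem missProb_singleton_le (h : IsPositiveReversible π P) (T : Finset V) (t : ℕ) (u : V) :
    missProb P u {(T : Set V)} t ≤ avoidFactor π P T ^ t * √((∑ v, π v) / π u) := by
  have : Nonempty V := ⟨u⟩
  have hρ : 0 ≤ avoidFactor π P T ^ t := pow_nonneg (h.avoidFactor_nonneg T) t
  have hπu := h.weight_pos u
  have hterm : ∀ v, 0 ≤ π v * missProb P v {(T : Set V)} t ^ 2 := fun v ↦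
    mul_nonneg (h.weight_pos v).le (sq_nonneg _)
  refine (le_abs_self _).trans ?_
  rw [← Real.sqrt_sq hρ, ← Real.sqrt_mul (sq_nonneg _), ← mul_div_assoc]
  refine Real.abs_le_sqrt ((le_div_iff₀ hπu).2 ?_)
  calc missProb P u {(T : Set V)} t ^ 2 * π u
      = π u * missProb P u {(T : Set V)} t ^ 2 := mul_comm _ _
    _ ≤ ∑ v, π v * missProb P v {(T : Set V)} t ^ 2 :=
        single_le_sum (fun v _ ↦ hterm v) (mem_univ u)
    _ = (fun u ↦ missProb P u {(T : Set V)} t) ⬝ᵥ diagonal π *ᵥ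
        (fun u ↦ missProb P u {(T : Set V)} t) :=
        sum_congr rfl fun v _ ↦ by rw [mulVec_diagonal]; ring
    _ ≤ _ := h.missProb_dotProduct_le T t

end IsPositiveReversible

section LazyWalk

variable {V : Type*} [Fintype V] (G : SimpleGraph V)

theorem lazyMatrix_nonneg [DecidableEq V] (u v : V) : 0 ≤ lazyMatrix G u v := by
  rw [lazyMatrix, of_apply]
  positivity

variable [DecidableRel G.Adj]

theorem sqrt_sum_degree_div_degree_le (u : V) :
    √((∑ v, (G.degree v : ℝ)) / G.degree u) ≤ Fintype.card V := by
  refine Real.sqrt_le_iff.2 ⟨Nat.cast_nonneg _, ?_⟩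
  calc (∑ v, (G.degree v : ℝ)) / G.degree u
      ≤ ∑ v, (G.degree v : ℝ) :=
        div_nat_le_self_of_nonnneg (sum_nonneg fun _ _ ↦ Nat.cast_nonneg _) _
    _ ≤ ∑ _v : V, (Fintype.card V : ℝ) :=
        sum_le_sum fun v _ ↦ Nat.cast_le.2 (G.degree_lt_card_verts v).le
    _ = (Fintype.card V : ℝ) ^ 2 := by simp [sq]

variable [DecidableEq V]

theorem posSemidef_degMatrix_add_adjMatrix : (G.degMatrix ℝ + G.adjMatrix ℝ).PosSemidef := by
  refine .of_dotProduct_mulVec_nonneg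
    ((G.isHermitian_degMatrix ℝ).add (G.isHermitian_adjMatrix ℝ)) fun x ↦ ?_
  have hdeg : x ⬝ᵥ G.degMatrix ℝ *ᵥ x = ∑ i, ∑ j, if G.Adj i j then x i ^ 2 else 0 := by
    simp only [G.dotProduct_mulVec_degMatrix, G.degree_eq_sum_if_adj, sum_mul, ite_mul, one_mul,
      zero_mul, sq]
  have hdeg' : x ⬝ᵥ G.degMatrix ℝ *ᵥ x = ∑ i, ∑ j, if G.Adj i j then x j ^ 2 else 0 := by
    rw [hdeg, sum_comm]
    simp only [G.adj_comm]
  have hsq : x ⬝ᵥ (G.degMatrix ℝ + G.adjMatrix ℝ) *ᵥ x =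
      (∑ i, ∑ j, if G.Adj i j then (x i + x j) ^ 2 else 0) / 2 := by
    have hadj : x ⬝ᵥ G.adjMatrix ℝ *ᵥ x = ∑ i, ∑ j, if G.Adj i j then x i * x j else 0 :=
      G.dotProduct_mulVec_adjMatrix x x
    rw [add_mulVec, dotProduct_add, eq_div_iff two_ne_zero, add_mul, mul_two, mul_two]
    nth_rw 2 [hdeg']
    rw [hdeg, hadj]
    simp only [← sum_add_distrib]
    refine sum_congr rfl fun i _ ↦ sum_congr rfl fun j _ ↦ ?_
    split_ifs <;> ring
  rw [star_trivial, hsq]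
  positivity

theorem lazyMatrix_apply (u v : V) :
    lazyMatrix G u v = (if u = v then 1 / 2 else 0) +
      if G.Adj u v then 1 / (2 * (G.degree u : ℝ)) else 0 := by
  have hdeg : (G.neighborSet u).ncard = G.degree u := by
    rw [Set.ncard_eq_toFinset_card', ← G.card_neighborFinset_eq_degree]
    rfl
  rw [lazyMatrix, of_apply, hdeg]
  congr

variable {G}

theorem diagonal_degree_mul_lazyMatrix (hG : ∀ v, 0 < G.degree v) :
    diagonal (fun v ↦ (G.degree v : ℝ)) * lazyMatrix G =
      (1 / 2 : ℝ) • (G.degMatrix ℝ + G.adjMatrix ℝ) := by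
  ext u v
  have hu : (G.degree u : ℝ) ≠ 0 := Nat.cast_ne_zero.2 (hG u).ne'
  rw [diagonal_mul, lazyMatrix_apply, Matrix.smul_apply, Matrix.add_apply,
    SimpleGraph.degMatrix, diagonal_apply, SimpleGraph.adjMatrix_apply, smul_eq_mul]
  split_ifs <;> field_simp <;> ring

theorem degree_mul_lazyMatrix_mulVec (hG : ∀ v, 0 < G.degree v) (f : V → ℝ) (v : V) :
    G.degree v * (lazyMatrix G *ᵥ f) v = G.degree v * f v - (G.lapMatrix ℝ *ᵥ f) v / 2 := by
  have h := congrFun (congrArg (· *ᵥ f) (diagonal_degree_mul_lazyMatrix hG)) v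
  simp only [← mulVec_mulVec, mulVec_diagonal, smul_mulVec, add_mulVec, Pi.smul_apply,
    Pi.add_apply, G.degMatrix_mulVec_apply, smul_eq_mul] at h
  rw [h, SimpleGraph.lapMatrix, sub_mulVec, Pi.sub_apply, G.degMatrix_mulVec_apply]
  ring

theorem lazyMatrix_mulVec_eq_self_iff (hG : ∀ v, 0 < G.degree v) (f : V → ℝ) :
    lazyMatrix G *ᵥ f = f ↔ G.lapMatrix ℝ *ᵥ f = 0 := by
  simp only [funext_iff, Pi.zero_apply]
  refine forall_congr' fun v ↦ ?_
  have hv : (G.degree v : ℝ) ≠ 0 := Nat.cast_ne_zero.2 (hG v).ne'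
  rw [← mul_right_inj' hv, degree_mul_lazyMatrix_mulVec hG, sub_eq_self, div_eq_zero_iff]
  simp

theorem isPositiveReversible_lazyMatrix [Nontrivial V] (hG : G.Connected) :
    IsPositiveReversible (fun v ↦ (G.degree v : ℝ)) (lazyMatrix G) := by
  have hdeg : ∀ v, 0 < G.degree v := fun v ↦ hG.preconnected.degree_pos_of_nontrivial v
  refine ⟨fun v ↦ Nat.cast_pos.2 (hdeg v), ⟨lazyMatrix_nonneg G, ?_⟩, ?_, fun f hf u v ↦ ?_⟩
  · exact (lazyMatrix_mulVec_eq_self_iff hdeg 1).2 G.lapMatrix_mulVec_const_eq_zero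
  · rw [diagonal_degree_mul_lazyMatrix hdeg]
    exact (posSemidef_degMatrix_add_adjMatrix G).smul (by norm_num)
  · exact (G.lapMatrix_mulVec_eq_zero_iff_forall_reachable).1
      ((lazyMatrix_mulVec_eq_self_iff hdeg f).1 hf) u v (hG u v)

end LazyWalk

section WalkSupports

variable {V : Type*} [DecidableEq V] {G : SimpleGraph V}

theorem exists_walk_support_eq_insert {a b x z : V} {p : G.Walk a b} (hx : x ∈ p.support)
    (hxz : G.Adj x z) :
    ∃ q : G.Walk a b, q.length = p.length + 2 ∧
      q.support.toFinset = insert z p.support.toFinset := by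
  refine ⟨(p.takeUntil x hx).append (.cons hxz (.cons hxz.symm (p.dropUntil x hx))), ?_, ?_⟩
  · have hlen := congrArg SimpleGraph.Walk.length (p.take_spec hx)
    simp only [SimpleGraph.Walk.length_append, SimpleGraph.Walk.length_cons] at hlen ⊢
    lia
  · ext v
    have hxd : x ∈ (p.dropUntil x hx).support := SimpleGraph.Walk.start_mem_support _
    conv_rhs => rw [← p.take_spec hx]
    simp only [List.mem_toFinset, SimpleGraph.Walk.mem_support_append_iff, mem_insert,
      SimpleGraph.Walk.support_cons, List.mem_cons]
    grind

theorem exists_walk_length_eq_card_support_eq [Fintype V] (hG : G.Connected) {k : ℕ}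
    (hk : k < Fintype.card V) :
    ∃ (a b : V) (p : G.Walk a b), p.length = 2 * k ∧ #p.support.toFinset = k + 1 := by
  induction k with
  | zero =>
    obtain ⟨a⟩ := hG.nonempty
    exact ⟨a, a, .nil, rfl, rfl⟩
  | succ k ih =>
    obtain ⟨a, b, p, hlen, hcard⟩ := ih (by lia)
    obtain ⟨y, hy⟩ : ∃ y, y ∉ p.support.toFinset := by
      by_contra! hall
      rw [eq_univ_iff_forall.2 hall, card_univ] at hcard
      lia
    obtain ⟨w⟩ := hG.preconnected a y
    obtain ⟨d, -, hfst, hsnd⟩ :=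
      w.exists_boundary_dart {x | x ∈ p.support} p.start_mem_support (by simpa using hy)
    obtain ⟨q, hqlen, hqsupp⟩ := exists_walk_support_eq_insert hfst d.adj
    refine ⟨a, b, q, by lia, ?_⟩
    rw [hqsupp, card_insert_of_notMem (by simpa using hsnd), hcard]

variable [Fintype V] (G) [DecidableRel G.Adj]

/-- The vertex sets of the walks of length `k` in `G` that start at `v`, enumerated through the
first step so that they can be counted. -/
def walkSupports : ℕ → V → Finset (Finset V)
  | 0, v => {{v}}
  | k + 1, v => (G.neighborFinset v).biUnion fun w ↦ (walkSupports k w).image (insert v)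

theorem card_walkSupports_le (k : ℕ) (v : V) : #(walkSupports G k v) ≤ G.maxDegree ^ k := by
  induction k generalizing v with
  | zero => simp [walkSupports]
  | succ k ih =>
    rw [walkSupports, pow_succ']
    calc #((G.neighborFinset v).biUnion fun w ↦ (walkSupports G k w).image (insert v))
        ≤ #(G.neighborFinset v) * G.maxDegree ^ k :=
          card_biUnion_le_card_mul _ _ _ fun w _ ↦ card_image_le.trans (ih w)
      _ ≤ G.maxDegree * G.maxDegree ^ k := by
          gcongr
          exact G.card_neighborFinset_eq_degree v ▸ G.degree_le_maxDegree v

variable {G}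

theorem support_mem_walkSupports {a b : V} (p : G.Walk a b) :
    p.support.toFinset ∈ walkSupports G p.length a := by
  induction p with
  | nil => simp [walkSupports]
  | cons h p ih =>
    simp only [SimpleGraph.Walk.length_cons, walkSupports, mem_biUnion, mem_image]
    exact ⟨_, by simpa using h, _, ih, by simp⟩

theorem exists_mem_walkSupports_of_mem_connEdgeSubgraphVerts {s : ℕ} {U : Set V}
    (hU : U ∈ connEdgeSubgraphVerts G s) :
    ∃ v, ∃ T ∈ walkSupports G (2 * (s - 1)) v, (T : Set V) = U ∧ #T = s := by
  obtain ⟨E', hE, -, rfl, hs, hconn⟩ := hU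
  have hHG : SimpleGraph.fromEdgeSet (E' : Set (Sym2 V)) ≤ G := fun x y hxy ↦
    hE ((SimpleGraph.fromEdgeSet_adj _).1 hxy).1
  have hcard : Fintype.card (edgeVerts E') = s := by
    rw [← hs, Set.ncard_eq_toFinset_card', Set.toFinset_card]
  have hpos : 0 < Fintype.card (edgeVerts E') := Fintype.card_pos_iff.2 hconn.nonempty
  obtain ⟨a, b, p, hlen, hvisited⟩ := exists_walk_length_eq_card_support_eq hconn
    (k := s - 1) (by lia)
  have hall : p.support.toFinset = univ := (card_eq_iff_eq_univ _).1 (by lia)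
  let φ : (SimpleGraph.fromEdgeSet (E' : Set (Sym2 V))).induce (edgeVerts E') →g G :=
    (SimpleGraph.Hom.ofLE hHG).comp (SimpleGraph.Embedding.induce _).toHom
  have hsupp : ((p.map φ).support.toFinset : Set V) = edgeVerts E' := by
    ext v
    rw [mem_coe, List.mem_toFinset, SimpleGraph.Walk.support_map, List.mem_map]
    refine ⟨fun ⟨x, _, hx⟩ ↦ hx ▸ x.2, fun hv ↦ ⟨⟨v, hv⟩, ?_, rfl⟩⟩
    rw [← List.mem_toFinset, hall]
    exact mem_univ _
  refine ⟨φ a, (p.map φ).support.toFinset, ?_, hsupp, ?_⟩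
  · simpa only [SimpleGraph.Walk.length_map, hlen] using support_mem_walkSupports (p.map φ)
  · rw [← Set.ncard_coe_finset, hsupp, hs]

end WalkSupports

section MainEstimate

variable {V : Type*} [Fintype V] [DecidableEq V] {G : SimpleGraph V} [DecidableRel G.Adj]

theorem avoidFactor_lazyMatrix_le_exp [Nontrivial V] (hG : G.Connected) (T : Finset V) :
    avoidFactor (fun v ↦ (G.degree v : ℝ)) (lazyMatrix G) T ≤
      Real.exp (-((1 - lambdaMax (lazyMatrix G)) *
        (G.minDegree * #T / (2 * #G.edgeFinset)))) := by
  have hgap : 0 ≤ 1 - lambdaMax (lazyMatrix G) :=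
    sub_nonneg.2 (isPositiveReversible_lazyMatrix hG).lambdaMax_lt_one.le
  have hsum : ∑ v, (G.degree v : ℝ) = 2 * #G.edgeFinset :=
    mod_cast G.sum_degrees_eq_twice_card_edges
  have hT : (G.minDegree * #T : ℝ) ≤ ∑ v ∈ T, (G.degree v : ℝ) := by
    rw [mul_comm, ← nsmul_eq_mul]
    exact card_nsmul_le_sum _ _ _ fun v _ ↦ Nat.cast_le.2 (G.minDegree_le_degree v)
  refine (Real.one_sub_le_exp_neg _).trans (Real.exp_le_exp.2 (neg_le_neg ?_))
  rw [hsum]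
  gcongr

theorem missProb_connEdgeSubgraphVerts_le [Nontrivial V] (hG : G.Connected) (s t : ℕ) (u : V) :
    missProb (lazyMatrix G) u (connEdgeSubgraphVerts G s) t ≤
      (Fintype.card V * G.maxDegree ^ (2 * (s - 1))) *
        (Real.exp (-((1 - lambdaMax (lazyMatrix G)) *
          (G.minDegree * s / (2 * #G.edgeFinset)))) ^ t * Fintype.card V) := by
  set F := {T ∈ univ.biUnion (walkSupports G (2 * (s - 1))) | #T = s}
  have hchain := isPositiveReversible_lazyMatrix hG
  have hcover : ∀ U ∈ connEdgeSubgraphVerts G s, ∃ T ∈ F, (T : Set V) = U := fun U hU ↦ by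
    obtain ⟨v, T, hT, hTU, hTs⟩ := exists_mem_walkSupports_of_mem_connEdgeSubgraphVerts hU
    exact ⟨T, mem_filter.2 ⟨mem_biUnion.2 ⟨v, mem_univ v, hT⟩, hTs⟩, hTU⟩
  have hcard : #F ≤ Fintype.card V * G.maxDegree ^ (2 * (s - 1)) :=
    (card_filter_le _ _).trans
      (card_biUnion_le_card_mul _ _ _ fun v _ ↦ card_walkSupports_le G _ v)
  have havoid : ∀ T ∈ F, missProb (lazyMatrix G) u {(T : Set V)} t ≤
      Real.exp (-((1 - lambdaMax (lazyMatrix G)) *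
        (G.minDegree * s / (2 * #G.edgeFinset)))) ^ t * Fintype.card V := fun T hT ↦ by
    refine (hchain.missProb_singleton_le T t u).trans (mul_le_mul ?_
      (sqrt_sum_degree_div_degree_le G u) (Real.sqrt_nonneg _) (by positivity))
    rw [← (mem_filter.1 hT).2]
    exact pow_le_pow_left₀ (hchain.avoidFactor_nonneg T) (avoidFactor_lazyMatrix_le_exp hG T) t
  calc missProb (lazyMatrix G) u (connEdgeSubgraphVerts G s) t
      ≤ ∑ T ∈ F, missProb (lazyMatrix G) u {(T : Set V)} t :=
        missProb_le_sum (lazyMatrix_nonneg G) u hcover t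
    _ ≤ #F * _ := (sum_le_card_nsmul _ _ _ havoid).trans_eq (nsmul_eq_mul _ _)
    _ ≤ _ := by
        gcongr
        exact_mod_cast hcard

end MainEstimate

theorem pow_two_mul_sub_one_le_exp {x L : ℝ} (hx : 0 ≤ x) {s : ℕ} (hs : s ≤ L) :
    x ^ (2 * (s - 1)) ≤ Real.exp (2 * x * L) := by
  have hx_exp : x ≤ Real.exp x := by linarith [Real.add_one_le_exp x]
  have hs' : ((2 * (s - 1) : ℕ) : ℝ) ≤ 2 * L := by
    have : ((2 * (s - 1) : ℕ) : ℝ) ≤ 2 * s := mod_cast (by lia)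
    linarith
  calc x ^ (2 * (s - 1)) ≤ Real.exp x ^ (2 * (s - 1)) := pow_le_pow_left₀ hx hx_exp _
    _ = Real.exp ((2 * (s - 1) : ℕ) * x) := (Real.exp_nat_mul _ _).symm
    _ ≤ Real.exp (2 * x * L) := Real.exp_le_exp.2 (by nlinarith)

theorem mul_exp_neg_pow_le_one_div_pow {n x r : ℝ} (hn : 0 < n) (hx : 0 ≤ x) (hr : 0 < r)
    {s t : ℕ} (hs : s ≤ Real.log n) (ht : 7 * (x + 7) * Real.log n / r ≤ t) :
    (n * x ^ (2 * (s - 1))) * (Real.exp (-r) ^ t * n) ≤ 1 / n ^ 3 := by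
  have hlog : 0 ≤ Real.log n := s.cast_nonneg.trans hs
  have hexp : Real.exp (Real.log n) = n := Real.exp_log hn
  have hdecay : Real.exp (-r) ^ t ≤ Real.exp (-(7 * (x + 7) * Real.log n)) := by
    rw [← Real.exp_nat_mul, mul_neg]
    exact Real.exp_le_exp.2 (neg_le_neg ((div_le_iff₀ hr).1 ht))
  calc (n * x ^ (2 * (s - 1))) * (Real.exp (-r) ^ t * n)
      ≤ (n * Real.exp (2 * x * Real.log n)) * (Real.exp (-(7 * (x + 7) * Real.log n)) * n) := by
        gcongr
        exact pow_two_mul_sub_one_le_exp hx hs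
    _ = Real.exp (Real.log n + 2 * x * Real.log n +
          (-(7 * (x + 7) * Real.log n) + Real.log n)) := by
        rw [Real.exp_add, Real.exp_add, Real.exp_add, hexp]
    _ ≤ Real.exp (-(3 * Real.log n)) := Real.exp_le_exp.2 (by linarith [mul_nonneg hx hlog])
    _ = 1 / n ^ 3 := by
        rw [Real.exp_neg, ← Nat.cast_ofNat, Real.exp_nat_mul, hexp, one_div]

theorem stmt14_general {V : Type*} [Fintype V] [DecidableEq V] (G : SimpleGraph V)
    [DecidableRel G.Adj] (hG : G.Connected) (s : ℕ) (hs : 1 ≤ s)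
    (hsn : s ≤ Real.log (Fintype.card V)) (u : V) :
    missProb (lazyMatrix G) u (connEdgeSubgraphVerts G s)
        ⌈14 * ((G.maxDegree : ℝ) + 7) * (G.edgeFinset.card : ℝ) * Real.log (Fintype.card V) /
          ((G.minDegree : ℝ) * s * (1 - lambdaMax (lazyMatrix G)))⌉₊ ≤
      1 / (Fintype.card V : ℝ) ^ 3 := by
  have hs0 : (0 : ℝ) < s := Nat.cast_pos.2 hs
  have : Nontrivial V := by
    rw [← Fintype.one_lt_card_iff_nontrivial, ← Nat.one_lt_cast (α := ℝ)]
    exact (Real.log_pos_iff (Nat.cast_nonneg _)).1 (hs0.trans_le hsn)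
  have hgap : 0 < 1 - lambdaMax (lazyMatrix G) :=
    sub_pos.2 (isPositiveReversible_lazyMatrix hG).lambdaMax_lt_one
  have hδ : (0 : ℝ) < G.minDegree :=
    Nat.cast_pos.2 hG.preconnected.minDegree_pos_of_nontrivial
  have hm : (0 : ℝ) < #G.edgeFinset := by
    obtain ⟨v, hv⟩ := hG.preconnected.exists_adj_of_nontrivial u
    exact Nat.cast_pos.2 (card_pos.2 ⟨s(u, v), SimpleGraph.mem_edgeFinset.2 hv⟩)
  refine (missProb_connEdgeSubgraphVerts_le hG s _ u).trans
    (mul_exp_neg_pow_le_one_div_pow (Nat.cast_pos.2 Fintype.card_pos) (Nat.cast_nonneg _)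
      (mul_pos hgap (div_pos (mul_pos hδ hs0) (mul_pos two_pos hm))) hsn ?_)
  refine le_trans (le_of_eq ?_) (Nat.le_ceil _)
  field_simp
  ring

/-- There is a constant `c` such that: for every finite connected graph
`G` on `n` vertices and `m` edges, with minimum degree `δ ≥ 2` and maximum degree `Δ`, and
every integer `1 ≤ s ≤ log n`, setting `t* = 14·(Δ+7)·m·log n/(δ·s·(1 − λmax))`, for every
start vertex `u`, with probability at least `1 − c/n³` the lazy simple random walk started
at `u` visits, within `t*` steps, at least one vertex of every connected edge-induced
subgraph of `G` having exactly `s` vertices. -/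
theorem stmt14 :
    ∃ c : ℝ, 0 < c ∧
      ∀ (V : Type) [Fintype V] [DecidableEq V] (G : SimpleGraph V) [DecidableRel G.Adj],
        G.Connected → 2 ≤ G.minDegree →
        ∀ s : ℕ, 1 ≤ s → (s : ℝ) ≤ Real.log (Fintype.card V) →
        ∀ u : V,
          missProb (fun a b => lazyMatrix G a b) u (connEdgeSubgraphVerts G s)
              ⌈14 * ((G.maxDegree : ℝ) + 7) * (G.edgeFinset.card : ℝ) *
                  Real.log (Fintype.card V) /
                ((G.minDegree : ℝ) * (s : ℝ) * (1 - lambdaMax (lazyMatrix G)))⌉₊ ≤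
            c / (Fintype.card V : ℝ) ^ 3 :=
  ⟨1, one_pos, fun _ _ _ G _ hG _ ↦ stmt14_general G hG⟩
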